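/- Let A be a ring that is left and right Noetherian, let d be a natural number, and suppose that A has injective dimension at most d as a left module over itself and finite injective dimension as a right module over itself. Then every left A-module M of finite flat dimension has projective dimension at most d. -/

import Mathlib

/-!
If `A` is a left and right Noetherian ring which has injective dimension at most `d`
as a left module over itself and finite injective dimension as a right module over
itself (i.e. `Aᵐᵒᵖ` has finite injective dimension over `Aᵐᵒᵖ`), then every left
`A`-module of finite flat dimension has projective dimension at most `d`.
-/

universe u

open CategoryTheory

/-- Lazard's criterion: a left `A`-module is flat if and only if every linear map
from a finitely presented module factors through a finite free module.  This
characterization of flatness is valid over arbitrary (noncommutative) rings. -/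
def ModuleFlat (A : Type u) [Ring A] (M : Type u) [AddCommGroup M] [Module A M] : Prop :=
  ∀ (N : ModuleCat.{u} A), Module.FinitePresentation A N →
    ∀ f : N →ₗ[A] M, ∃ (k : ℕ) (g : N →ₗ[A] (Fin k → A)) (h : (Fin k → A) →ₗ[A] M),
      h.comp g = f

/-- `M` has flat dimension at most `n`: there is an exact sequence
`0 → F_n → ⋯ → F_0 → M → 0` with every `F_i` flat (encoded as a flat resolution
which vanishes in degrees `> n`). -/
def HasFlatDimLE (A : Type u) [Ring A] (M : Type u) [AddCommGroup M] [Module A M]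
    (n : ℕ) : Prop :=
  ∃ (F : ℕ → ModuleCat.{u} A) (d : ∀ i : ℕ, F (i + 1) →ₗ[A] F i) (ε : F 0 →ₗ[A] M),
    (∀ i, ModuleFlat A (F i)) ∧ (∀ i, n < i → Subsingleton (F i)) ∧
    Function.Surjective ε ∧ LinearMap.range (d 0) = LinearMap.ker ε ∧
    ∀ i, LinearMap.range (d (i + 1)) = LinearMap.ker (d i)

/-- `M` has projective dimension at most `n`: there is an exact sequence
`0 → P_n → ⋯ → P_0 → M → 0` with every `P_i` projective. -/
def HasProjDimLE (A : Type u) [Ring A] (M : Type u) [AddCommGroup M] [Module A M]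
    (n : ℕ) : Prop :=
  ∃ (P : ℕ → ModuleCat.{u} A) (d : ∀ i : ℕ, P (i + 1) →ₗ[A] P i) (ε : P 0 →ₗ[A] M),
    (∀ i, Module.Projective A (P i)) ∧ (∀ i, n < i → Subsingleton (P i)) ∧
    Function.Surjective ε ∧ LinearMap.range (d 0) = LinearMap.ker ε ∧
    ∀ i, LinearMap.range (d (i + 1)) = LinearMap.ker (d i)

/-- `M` has injective dimension at most `n`: there is an exact sequence
`0 → M → I^0 → ⋯ → I^n → 0` with every `I^i` injective. -/
def HasInjDimLE (A : Type u) [Ring A] (M : Type u) [AddCommGroup M] [Module A M]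
    (n : ℕ) : Prop :=
  ∃ (I : ℕ → ModuleCat.{u} A) (d : ∀ i : ℕ, I i →ₗ[A] I (i + 1)) (ι : M →ₗ[A] I 0),
    (∀ i, Module.Injective A (I i)) ∧ (∀ i, n < i → Subsingleton (I i)) ∧
    Function.Injective ι ∧ LinearMap.range ι = LinearMap.ker (d 0) ∧
    ∀ i, LinearMap.range (d i) = LinearMap.ker (d (i + 1))

/-!
Let `A` be left Noetherian with `injdim A ≤ d`. A class in `Ext^{d+1}(N, F)` with `N` finitely
generated and `F` flat comes from some `Ext^{d+1}(N, A^k) = 0`, so Baer's criterion, shifted to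
degree `d + 1`, gives `injdim F ≤ d` for every flat `F`. The syzygies `K_i` of `F = K_0` along a
projective resolution are again flat, so `Ext^1(K_d, K_{d+1}) = Ext^{d+1}(F, K_{d+1})` vanishes,
`K_d` is projective, and `projdim F ≤ d`. For `M` of finite flat dimension, induction on the length
of a flat resolution yields `projdim M ≤ d + 1`. Then `Ext^{d+1}(M, -)` is right exact, and it
vanishes on projectives because these are flat; hence it is zero and `projdim M ≤ d`.
-/

open Abelian Limits

section AbelianCategory

universe w v v'

variable {C : Type v} [Category.{v'} C] [Abelian C]

lemma shortExact_kernel_of_epi {X Y : C} (p : X ⟶ Y) [Epi p] :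
    (ShortComplex.mk (kernel.ι p) p (kernel.condition p)).ShortExact where
  exact := ShortComplex.exact_kernel p

lemma shortExact_cokernel_of_mono {X Y : C} (i : X ⟶ Y) [Mono i] :
    (ShortComplex.mk i (cokernel.π i) (cokernel.condition i)).ShortExact where
  exact := ShortComplex.exact_cokernel i

lemma hasInjectiveDimensionLT_biproduct {J : Type*} [Finite J] (Y : J → C)
    [HasBiproduct Y] (n : ℕ) (hY : ∀ j, HasInjectiveDimensionLT (Y j) n) :
    HasInjectiveDimensionLT (⨁ Y) n := by
  have := Fintype.ofFinite J
  let := HasExt.standard C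
  refine HasInjectiveDimensionLT.mk fun i hi X e ↦ ?_
  refine (Ext.addEquivBiproduct X (biproduct.isBilimit Y) i).injective (funext fun j ↦ ?_)
  exact (HasInjectiveDimensionLT.subsingleton (Y j) n i hi X).elim _ _

variable [HasExt.{w} C]

lemma projective_of_subsingleton_ext_one_kernel {P X : C} [Projective P] (p : P ⟶ X) [Epi p]
    [Subsingleton (Ext X (kernel p) 1)] : Projective X := by
  obtain ⟨e, he⟩ := Ext.covariant_sequence_exact₃ X (shortExact_kernel_of_epi p)
    (Ext.mk₀ (𝟙 X)) (zero_add 1) (Subsingleton.elim _ _)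
  obtain ⟨s, rfl⟩ := Ext.homEquiv₀.symm.surjective e
  have section_p : s ≫ p = 𝟙 X := Ext.homEquiv₀.symm.injective (by simpa using he)
  exact Retract.projective ⟨s, p, section_p⟩

lemma subsingleton_ext_kernel_of_projective {P X : C} [Projective P] (p : P ⟶ X) [Epi p] (Y : C)
    (n : ℕ) [Subsingleton (Ext X Y (n + 2))] : Subsingleton (Ext (kernel p) Y (n + 1)) := by
  refine subsingleton_of_forall_eq 0 fun e ↦ ?_
  obtain ⟨e', rfl⟩ := Ext.contravariant_sequence_exact₁ (shortExact_kernel_of_epi p) Y e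
    (add_comm 1 (n + 1)) (Subsingleton.elim _ _)
  rw [Ext.eq_zero_of_projective e', Ext.comp_zero]

lemma subsingleton_ext_cokernel_of_injective {I Y : C} [Injective I] (i : Y ⟶ I) [Mono i] (X : C)
    (n : ℕ) [Subsingleton (Ext X Y (n + 2))] : Subsingleton (Ext X (cokernel i) (n + 1)) := by
  refine subsingleton_of_forall_eq 0 fun e ↦ ?_
  obtain ⟨e', rfl⟩ := Ext.covariant_sequence_exact₃ X (shortExact_cokernel_of_mono i) e
    rfl (Subsingleton.elim _ _)
  rw [Ext.eq_zero_of_injective e', Ext.zero_comp]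

variable [EnoughProjectives C]

lemma hasProjectiveDimensionLE_of_subsingleton_ext_of_kernel_closed (Q : ObjectProperty C)
    (hQ : ∀ ⦃P X : C⦄ (p : P ⟶ X) [Epi p], Projective P → Q X → Q (kernel p)) {X : C} (hX : Q X)
    (n : ℕ) (hext : ∀ Y, Q Y → Subsingleton (Ext.{w} X Y (n + 1))) :
    HasProjectiveDimensionLE X n := by
  have hker : Q (kernel (Projective.π X)) := hQ _ inferInstance hX
  induction n generalizing X with
  | zero =>
    have := hext _ hker
    exact (projective_iff_hasProjectiveDimensionLE_zero X).1
      (projective_of_subsingleton_ext_one_kernel (Projective.π X))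
  | succ n ih =>
    have hK : HasProjectiveDimensionLE (kernel (Projective.π X)) n :=
      ih hker (fun Y hY ↦ by
        have := hext Y hY
        exact subsingleton_ext_kernel_of_projective _ Y n) (hQ _ inferInstance hker)
    exact (shortExact_kernel_of_epi _).hasProjectiveDimensionLT_X₃ (n + 1) hK inferInstance

lemma hasProjectiveDimensionLT_of_subsingleton_ext_projective (X : C) (n : ℕ)
    [HasProjectiveDimensionLT X (n + 1)]
    (hext : ∀ P : C, Projective P → Subsingleton (Ext.{w} X P n)) :
    HasProjectiveDimensionLT X n := by
  refine HasProjectiveDimensionLT.mk fun i hi Y e ↦ ?_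
  obtain rfl | hlt := hi.eq_or_lt
  · obtain ⟨e', rfl⟩ := Ext.covariant_sequence_exact₃ X
      (shortExact_kernel_of_epi (Projective.π Y)) e rfl
      (Ext.eq_zero_of_hasProjectiveDimensionLT _ (n + 1) le_rfl)
    have := hext (Projective.over Y) inferInstance
    rw [Subsingleton.elim e' 0, Ext.zero_comp]
  · exact e.eq_zero_of_hasProjectiveDimensionLT (n + 1) hlt

end AbelianCategory

variable {A : Type u} [Ring A]

section Modules

lemma exists_finset_forall_mem_supported {ι N : Type*} [AddCommGroup N] [Module A N]
    [Module.Finite A N] (f : N →ₗ[A] ι →₀ A) :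
    ∃ U : Finset ι, ∀ x, f x ∈ Finsupp.supported A A (U : Set ι) := by
  classical
  obtain ⟨T, hT⟩ := Module.Finite.fg_top (R := A) (M := N)
  refine ⟨T.biUnion fun t ↦ (f t).support, fun x ↦ ?_⟩
  have hspan : Submodule.span A (T : Set N) ≤
      (Finsupp.supported A A (T.biUnion fun t ↦ (f t).support : Set ι)).comap f :=
    Submodule.span_le.2 fun t ht ↦ Finset.coe_subset.2 <|
      Finset.subset_biUnion_of_mem (fun t ↦ (f t).support) ht
  exact hspan (hT ▸ Submodule.mem_top)

lemma injective_of_subsingleton_ext_one_quotient (M : ModuleCat.{u} A)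
    (hM : ∀ I : Ideal A, Subsingleton (Ext.{u} (ModuleCat.of A (A ⧸ I)) M 1)) :
    Injective M := by
  refine (Module.injective_iff_injective_object A M).1 (Module.Baer.injective fun I f ↦ ?_)
  let S : ShortComplex (ModuleCat.{u} A) := ModuleCat.shortComplexOfCompEqZero I.subtype I.mkQ
    (LinearMap.exact_subtype_mkQ I).linearMap_comp_eq_zero
  have hS : S.ShortExact := ModuleCat.shortComplex_shortExact S
    (LinearMap.exact_subtype_mkQ I) I.subtype_injective I.mkQ_surjective
  obtain ⟨e, he⟩ := Ext.contravariant_sequence_exact₁ hS M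
    (Ext.mk₀ (ModuleCat.ofHom f : S.X₁ ⟶ M)) (add_zero 1) ((hM I).elim _ _)
  obtain ⟨g, rfl⟩ := Ext.homEquiv₀.symm.surjective e
  have hg : S.f ≫ g = ModuleCat.ofHom f := Ext.homEquiv₀.symm.injective (by simpa using he)
  exact ⟨g.hom, fun x hx ↦ ConcreteCategory.congr_hom hg ⟨x, hx⟩⟩

lemma hasInjectiveDimensionLE_of_subsingleton_ext_quotient (M : ModuleCat.{u} A) (n : ℕ)
    (hM : ∀ I : Ideal A, Subsingleton (Ext.{u} (ModuleCat.of A (A ⧸ I)) M (n + 1))) :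
    HasInjectiveDimensionLE M n := by
  induction n generalizing M with
  | zero =>
    exact injective_iff_hasInjectiveDimensionLT_one.1
      (injective_of_subsingleton_ext_one_quotient M hM)
  | succ n ih =>
    have hcoker : HasInjectiveDimensionLE (cokernel (Injective.ι M)) n :=
      ih _ fun I ↦ subsingleton_ext_cokernel_of_injective _ _ n
    exact (shortExact_cokernel_of_mono _).hasInjectiveDimensionLT_X₁ (n + 1) hcoker inferInstance

lemma hasInjectiveDimensionLT_pi {J : Type} [Finite J] (Y : J → ModuleCat.{u} A) (n : ℕ)
    (hY : ∀ j, HasInjectiveDimensionLT (Y j) n) :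
    HasInjectiveDimensionLT (ModuleCat.of A (∀ j, Y j)) n :=
  have := hasInjectiveDimensionLT_biproduct Y n hY
  hasInjectiveDimensionLT_of_iso (ModuleCat.biproductIsoPi Y) n

end Modules

namespace ModuleFlat

variable {M N : Type u} [AddCommGroup M] [Module A M] [AddCommGroup N] [Module A N]

lemma of_retract (hN : ModuleFlat A N) (s : M →ₗ[A] N) (r : N →ₗ[A] M)
    (hrs : r ∘ₗ s = LinearMap.id) : ModuleFlat A M := by
  intro L hL f
  obtain ⟨k, g, h, hgh⟩ := hN L hL (s ∘ₗ f)
  refine ⟨k, g, r ∘ₗ h, ?_⟩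
  rw [LinearMap.comp_assoc, hgh, ← LinearMap.comp_assoc, hrs, LinearMap.id_comp]

lemma of_linearEquiv (hN : ModuleFlat A N) (e : M ≃ₗ[A] N) : ModuleFlat A M :=
  hN.of_retract e.toLinearMap e.symm.toLinearMap e.symm_comp

lemma finsupp (ι : Type u) : ModuleFlat A (ι →₀ A) := by
  intro N hN f
  obtain ⟨U, hU⟩ := exists_finset_forall_mem_supported f
  let e : Finsupp.supported A A (U : Set ι) ≃ₗ[A] (Fin U.card → A) :=
    Finsupp.supportedEquivFinsupp (U : Set ι) ≪≫ₗ
      Finsupp.linearEquivFunOnFinite A A (U : Set ι) ≪≫ₗ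
      LinearEquiv.funCongrLeft A A U.equivFin.symm
  refine ⟨U.card, e.toLinearMap ∘ₗ f.codRestrict _ hU,
    (Finsupp.supported A A (U : Set ι)).subtype ∘ₗ e.symm.toLinearMap, ?_⟩
  ext1 x
  simp

lemma of_projective [Module.Projective A M] : ModuleFlat A M := by
  obtain ⟨s, hs⟩ := Module.projective_def'.1 ‹Module.Projective A M›
  exact (finsupp M).of_retract s _ hs

/- A factorization `N → A^k → M` of a map `N → ker p` is corrected by a lift to `M` of the map
`A^k / N → M'` induced by `p`; such a lift exists because that map factors through some `A^m`. -/
lemma ker {M' : Type u} [AddCommGroup M'] [Module A M'] (hM : ModuleFlat A M)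
    (hM' : ModuleFlat A M') (p : M →ₗ[A] M') (hp : Function.Surjective p) :
    ModuleFlat A (LinearMap.ker p) := by
  intro N hN f
  obtain ⟨k, g, h, hgh⟩ := hM N hN ((LinearMap.ker p).subtype ∘ₗ f)
  have hgh_apply (x : N) : h (g x) = f x := LinearMap.congr_fun hgh x
  let q := (LinearMap.range g).mkQ
  let c : ((Fin k → A) ⧸ LinearMap.range g) →ₗ[A] M' :=
    (LinearMap.range g).liftQ (p ∘ₗ h) (by rintro _ ⟨x, rfl⟩; simp [hgh_apply])
  have hfp : Module.FinitePresentation A ((Fin k → A) ⧸ LinearMap.range g) :=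
    Module.finitePresentation_of_surjective q (Submodule.mkQ_surjective _)
      (by rw [Submodule.ker_mkQ]; exact Submodule.FG.of_finite)
  obtain ⟨m, a, b, hab⟩ := hM' (ModuleCat.of A ((Fin k → A) ⧸ LinearMap.range g)) hfp c
  obtain ⟨l, hl⟩ := Module.projective_lifting_property p b hp
  have hlift (x : Fin k → A) : p (l (a (q x))) = p (h x) := calc
    p (l (a (q x))) = b (a (q x)) := LinearMap.congr_fun hl _
    _ = c (q x) := LinearMap.congr_fun hab _
    _ = p (h x) := rfl
  refine ⟨k, g, (h - l ∘ₗ a ∘ₗ q).codRestrict _ fun x ↦ ?_, ?_⟩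
  · simp [hlift]
  · have hq (x : N) : q (g x) = 0 := by simp [q]
    ext x
    simp [hgh_apply, hq]

variable [IsNoetherianRing A]

lemma exists_ext_comp_eq {F : ModuleCat.{u} A} (hF : ModuleFlat A F) (N : ModuleCat.{u} A)
    [Module.Finite A N] {n : ℕ} (e : Ext.{u} N F n) :
    ∃ (k : ℕ) (e' : Ext.{u} N (ModuleCat.of A (Fin k → A)) n)
      (h : ModuleCat.of A (Fin k → A) ⟶ F), e'.comp (Ext.mk₀ h) (add_zero n) = e := by
  induction n generalizing N with
  | zero =>
    obtain ⟨f, rfl⟩ := Ext.homEquiv₀.symm.surjective e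
    obtain ⟨k, g, h, hgh⟩ := hF N (Module.finitePresentation_of_finite A N) f.hom
    have hf : ModuleCat.ofHom g ≫ ModuleCat.ofHom h = f := ModuleCat.hom_ext hgh
    exact ⟨k, Ext.mk₀ (ModuleCat.ofHom g), ModuleCat.ofHom h, by simp [hf]⟩
  | succ n ih =>
    obtain ⟨m, p, hp⟩ := Module.Finite.exists_fin' A N
    have hS := LinearMap.shortExact_shortComplexKer hp
    have hP : Projective (ModuleCat.of A (Fin m → A)) :=
      (IsProjective.iff_projective _).1 inferInstance
    have hfin : Module.Finite A (ModuleCat.of A (LinearMap.ker p)) :=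
      inferInstanceAs (Module.Finite A (LinearMap.ker p))
    obtain ⟨e₁, rfl⟩ := precomp_extClass_surjective_of_projective_X₂ F hS n e
    obtain ⟨k, e', h, rfl⟩ := ih _ e₁
    exact ⟨k, hS.extClass.comp e' (add_comm 1 n), h, Ext.comp_assoc_of_third_deg_zero ..⟩

lemma hasInjectiveDimensionLE {F : ModuleCat.{u} A} (hF : ModuleFlat A F) (d : ℕ)
    [HasInjectiveDimensionLE (ModuleCat.of A A) d] : HasInjectiveDimensionLE F d := by
  refine hasInjectiveDimensionLE_of_subsingleton_ext_quotient F d fun I ↦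
    subsingleton_of_forall_eq 0 fun e ↦ ?_
  have hfin : Module.Finite A (ModuleCat.of A (A ⧸ I)) :=
    inferInstanceAs (Module.Finite A (A ⧸ I))
  obtain ⟨k, e', h, rfl⟩ := hF.exists_ext_comp_eq _ e
  have hfree : HasInjectiveDimensionLE (ModuleCat.of A (Fin k → A)) d :=
    hasInjectiveDimensionLT_pi (fun _ ↦ ModuleCat.of A A) (d + 1) fun _ ↦ inferInstance
  rw [e'.eq_zero_of_hasInjectiveDimensionLT (d + 1) le_rfl, Ext.zero_comp]

lemma hasProjectiveDimensionLE {F : ModuleCat.{u} A} (hF : ModuleFlat A F) (d : ℕ)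
    [HasInjectiveDimensionLE (ModuleCat.of A A) d] : HasProjectiveDimensionLE F d := by
  refine hasProjectiveDimensionLE_of_subsingleton_ext_of_kernel_closed
    (fun X : ModuleCat.{u} A ↦ ModuleFlat A X) (fun P X p _ hP hX ↦ ?_) hF d fun Y hY ↦ ?_
  · have hker : ModuleFlat A (LinearMap.ker p.hom) :=
      of_projective.ker hX p.hom ((ModuleCat.epi_iff_surjective p).1 inferInstance)
    exact hker.of_linearEquiv (ModuleCat.kernelIsoKer p).toLinearEquiv
  · have := hY.hasInjectiveDimensionLE d
    exact HasInjectiveDimensionLT.subsingleton Y (d + 1) (d + 1) le_rfl F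

end ModuleFlat

section Resolutions

variable {M : Type u} [AddCommGroup M] [Module A M] {n : ℕ}

lemma HasFlatDimLE.moduleFlat (hM : HasFlatDimLE A M 0) : ModuleFlat A M := by
  obtain ⟨F, δ, ε, hflat, hzero, hε, hexact₀, -⟩ := hM
  have := hzero 1 one_pos
  have hker : LinearMap.ker ε = ⊥ := by
    rw [← hexact₀, LinearMap.range_eq_bot]
    exact Subsingleton.elim _ _
  exact (hflat 0).of_linearEquiv
    (LinearEquiv.ofBijective ε ⟨LinearMap.ker_eq_bot.1 hker, hε⟩).symm

lemma HasFlatDimLE.exists_surjective_from_flat (hM : HasFlatDimLE A M (n + 1)) :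
    ∃ (F : ModuleCat.{u} A) (ε : F →ₗ[A] M), ModuleFlat A F ∧ Function.Surjective ε ∧
      HasFlatDimLE A (LinearMap.ker ε) n := by
  obtain ⟨F, δ, ε, hflat, hzero, hε, hexact₀, hexact⟩ := hM
  refine ⟨F 0, ε, hflat 0, hε, fun i ↦ F (i + 1), fun i ↦ δ (i + 1),
    (δ 0).codRestrict _ fun x ↦ hexact₀.le (LinearMap.mem_range_self _ x),
    fun i ↦ hflat _, fun i hi ↦ hzero _ (by lia), ?_, ?_, fun i ↦ hexact _⟩
  · rintro ⟨x, hx⟩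
    obtain ⟨y, rfl⟩ := hexact₀.ge hx
    exact ⟨y, rfl⟩
  · rw [LinearMap.ker_codRestrict, hexact 0]

lemma HasInjDimLE.injective (hM : HasInjDimLE A M 0) : Module.Injective A M := by
  obtain ⟨I, δ, ι, hinj, hzero, hι, hexact₀, -⟩ := hM
  have := hzero 1 one_pos
  have hrange : LinearMap.range ι = ⊤ := by
    rw [hexact₀, LinearMap.ker_eq_top]
    exact Subsingleton.elim _ _
  let e := LinearEquiv.ofBijective ι ⟨hι, LinearMap.range_eq_top.1 hrange⟩
  exact ((Module.Baer.of_injective (hinj 0)).of_equiv e.symm).injective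

lemma HasInjDimLE.exists_injective_into_injective (hM : HasInjDimLE A M (n + 1)) :
    ∃ (I : ModuleCat.{u} A) (ι : M →ₗ[A] I), Module.Injective A I ∧ Function.Injective ι ∧
      HasInjDimLE A (I ⧸ LinearMap.range ι) n := by
  obtain ⟨I, δ, ι, hinj, hzero, hι, hexact₀, hexact⟩ := hM
  refine ⟨I 0, ι, hinj 0, hι, fun i ↦ I (i + 1), fun i ↦ δ (i + 1),
    (LinearMap.range ι).liftQ (δ 0) hexact₀.le,
    fun i ↦ hinj _, fun i hi ↦ hzero _ (by lia), ?_, ?_, fun i ↦ hexact _⟩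
  · exact LinearMap.ker_eq_bot.1 (Submodule.ker_liftQ_eq_bot _ _ _ hexact₀.ge)
  · rw [Submodule.range_liftQ, hexact 0]

lemma HasInjDimLE.hasInjectiveDimensionLE (hM : HasInjDimLE A M n) :
    HasInjectiveDimensionLE (ModuleCat.of A M) n := by
  induction n generalizing M with
  | zero =>
    exact injective_iff_hasInjectiveDimensionLT_one.1
      ((Module.injective_iff_injective_object A M).1 hM.injective)
  | succ n ih =>
    obtain ⟨I, ι, hI, hι, hcoker⟩ := hM.exists_injective_into_injective
    have hS := ModuleCat.shortComplex_shortExact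
      (ModuleCat.shortComplexOfCompEqZero ι (LinearMap.range ι).mkQ
        ι.exact_map_mkQ_range.linearMap_comp_eq_zero)
      ι.exact_map_mkQ_range hι (Submodule.mkQ_surjective _)
    have : Injective I := (Module.injective_iff_injective_object A I).1 hI
    exact hS.hasInjectiveDimensionLT_X₁ (n + 1) (ih hcoker)
      (inferInstanceAs (HasInjectiveDimensionLT I (n + 2)))

lemma hasProjDimLE_zero_of_projective [Module.Projective A M] : HasProjDimLE A M 0 := by
  let P : ℕ → ModuleCat.{u} A
    | 0 => ModuleCat.of A M
    | _ + 1 => ModuleCat.of A PUnit.{u + 1}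
  refine ⟨P, fun _ ↦ 0, LinearMap.id, ?_, ?_, Function.surjective_id, ?_, ?_⟩
  · rintro (_ | i)
    · exact ‹Module.Projective A M›
    · exact inferInstanceAs (Module.Projective A PUnit.{u + 1})
  · rintro (_ | i) hi
    · exact absurd hi (lt_irrefl 0)
    · exact inferInstanceAs (Subsingleton PUnit.{u + 1})
  · rw [LinearMap.range_zero, LinearMap.ker_id]
  · intro i
    have : Subsingleton (P (i + 1)) := inferInstanceAs (Subsingleton PUnit.{u + 1})
    exact Subsingleton.elim _ _

lemma HasProjDimLE.of_ker {P : Type u} [AddCommGroup P] [Module A P] [Module.Projective A P]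
    {p : P →ₗ[A] M} (hp : Function.Surjective p) (hker : HasProjDimLE A (LinearMap.ker p) n) :
    HasProjDimLE A M (n + 1) := by
  obtain ⟨R, δ, ε, hproj, hzero, hε, hexact₀, hexact⟩ := hker
  let R' : ℕ → ModuleCat.{u} A
    | 0 => ModuleCat.of A P
    | i + 1 => R i
  let δ' : ∀ i, R' (i + 1) →ₗ[A] R' i
    | 0 => (LinearMap.ker p).subtype ∘ₗ ε
    | i + 1 => δ i
  refine ⟨R', δ', p, ?_, ?_, hp, ?_, ?_⟩
  · rintro (_ | i)
    · exact ‹Module.Projective A P›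
    · exact hproj i
  · rintro (_ | i) hi
    · exact absurd hi (Nat.not_lt_zero _)
    · exact hzero i (Nat.lt_of_succ_lt_succ hi)
  · exact (LinearMap.range_comp_of_range_eq_top _ (LinearMap.range_eq_top.2 hε)).trans
      (Submodule.range_subtype _)
  · rintro (_ | i)
    · exact hexact₀.trans
        (LinearMap.ker_comp_of_ker_eq_bot _ (Submodule.ker_subtype _)).symm
    · exact hexact i

lemma hasProjDimLE_of_hasProjectiveDimensionLE {M : ModuleCat.{u} A}
    (hM : HasProjectiveDimensionLE M n) : HasProjDimLE A M n := by
  induction n generalizing M with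
  | zero =>
    have : Projective M := (projective_iff_hasProjectiveDimensionLE_zero M).2 hM
    exact hasProjDimLE_zero_of_projective
  | succ n ih =>
    let p : (M →₀ A) →ₗ[A] M := Finsupp.linearCombination A id
    have hp : Function.Surjective p := Finsupp.linearCombination_id_surjective A M
    have hfree : Projective (ModuleCat.of A (M →₀ A)) :=
      (IsProjective.iff_projective _).1 inferInstance
    have hker : HasProjectiveDimensionLE (ModuleCat.of A (LinearMap.ker p)) n :=
      ((LinearMap.shortExact_shortComplexKer hp).hasProjectiveDimensionLT_X₃_iff n hfree).1 hM
    exact .of_ker hp (ih hker)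

lemma HasFlatDimLE.hasProjectiveDimensionLE [IsNoetherianRing A] (hM : HasFlatDimLE A M n) (d : ℕ)
    [HasInjectiveDimensionLE (ModuleCat.of A A) d] :
    HasProjectiveDimensionLE (ModuleCat.of A M) d := by
  induction n generalizing M with
  | zero => exact hM.moduleFlat.hasProjectiveDimensionLE (F := ModuleCat.of A M) d
  | succ n ih =>
    obtain ⟨F, ε, hF, hε, hker⟩ := hM.exists_surjective_from_flat
    have hF_pd : HasProjectiveDimensionLE F d := hF.hasProjectiveDimensionLE d
    have hM_pd : HasProjectiveDimensionLE (ModuleCat.of A M) (d + 1) :=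
      (LinearMap.shortExact_shortComplexKer hε).hasProjectiveDimensionLT_X₃ (d + 1) (ih hker)
        (hasProjectiveDimensionLT_of_ge F (d + 1) (d + 2) (Nat.le_succ _))
    refine hasProjectiveDimensionLT_of_subsingleton_ext_projective _ (d + 1) fun P hP ↦ ?_
    have hP_id : HasInjectiveDimensionLE P d :=
      ModuleFlat.of_projective.hasInjectiveDimensionLE d
    exact HasInjectiveDimensionLT.subsingleton P (d + 1) (d + 1) le_rfl _

end Resolutions

theorem projDimLE_of_finite_flatDim_of_iwanagaGorenstein_general
    (A : Type u) [Ring A] [IsNoetherianRing A] (d : ℕ) (hA : HasInjDimLE A A d)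
    (M : Type u) [AddCommGroup M] [Module A M] (hM : ∃ n : ℕ, HasFlatDimLE A M n) :
    HasProjDimLE A M d := by
  obtain ⟨n, hn⟩ := hM
  have hA_id : HasInjectiveDimensionLE (ModuleCat.of A A) d := hA.hasInjectiveDimensionLE
  exact hasProjDimLE_of_hasProjectiveDimensionLE (hn.hasProjectiveDimensionLE d)

/-- Over a left and right Noetherian ring of injective dimension at most `d` as a left
module over itself and of finite injective dimension as a right module over itself
(a right `A`-module being the same thing as a left `Aᵐᵒᵖ`-module), every left module
of finite flat dimension has projective dimension at most `d`. -/
theorem projDimLE_of_finite_flatDim_of_iwanagaGorenstein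
    (A : Type u) [Ring A] [IsNoetherianRing A] [IsNoetherianRing Aᵐᵒᵖ] (d : ℕ)
    (hA_left : HasInjDimLE A A d) (hA_right : ∃ e : ℕ, HasInjDimLE Aᵐᵒᵖ Aᵐᵒᵖ e)
    (M : Type u) [AddCommGroup M] [Module A M]
    (hM : ∃ n : ℕ, HasFlatDimLE A M n) :
    HasProjDimLE A M d := by
  exact projDimLE_of_finite_flatDim_of_iwanagaGorenstein_general A d hA_left M hM
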